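/- arXiv:2206.02007 — 4 statements merged into one kernel-verified Lean document; each statement's English description precedes it below -/
import Mathlib

section
/- For every n ≥ 1 and every reachable terminal configuration of labeled chip-firing with chips 1, …, 2^n − 1 initially at the root: each node on levels 1, …, n holds exactly one chip and all other nodes hold none; moreover, for every node i with level(i) ≤ n, the chip at node 2^{n − level(i)}·i (the bottom straight left descendant of i) has the smallest label, and the chip at node 2^{n − level(i)}·(i+1) − 1 (the bottom straight right descendant of i) has the largest label, among all chips held by nodes of the subtree of i. -/
/-!
Forgetting labels, let a node of height `h` (level `n - h`) be assigned `2^(h+1) - h - 2` firings.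
The number of chips at a node is a linear function of the firings its neighbourhood still has to
make (`cnt_eq`). From this, no node exceeds its assigned number (`rem_nonneg`), and in a terminal
configuration every node has reached it (`rem_final`), which gives one chip on each node of levels
`1, …, n` and none elsewhere.

The order of the last firings is forced: when a node of height `h` makes its `j`-th firing from
the end, `j ≤ h`, its parent has exactly `j` firings left, its children have `j - 1`, and the node
holds exactly three chips (`endgame`).

For the labels, let `y` be the final chip at the bottom left descendant of `v` and let `P` be the
set of labels `≥ y`. By induction on the height, every chip that ever visits `v` lies in `P`
(`visitors`). For a leaf this holds since `y` is its only visitor. Otherwise every chip that visits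
the left child is in `P`; these include the smallest chip of each firing of `v`, so all chips
fired by `v` are in `P`. It remains to see that the final chip at `v` is in `P` too, which follows
from the endgame by passing from `v` to its ancestors (`waiting`). As all chips strictly below `v`
were fired by `v`, all final chips in the subtree of `v` are `≥ y`. The statement about largest
labels is the mirror image; a parameter `d ∈ {0, 1}` for the side treats both at once.
-/

/-- The level of node `i` in the infinite binary tree: `⌊log₂ i⌋ + 1`. -/
def level (i : ℕ) : ℕ := Nat.log 2 i + 1

/-- The parent of node `i`; the root (node 1) is its own parent via the self-loop. -/
def parent (i : ℕ) : ℕ := if i = 1 then 1 else i / 2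

/-- A labeled configuration records, for each chip label, the node currently holding it. -/
abbrev LConfig := ℕ → ℕ

/-- A firing move: the node fired together with the three chosen chip labels
`a < b < c` (smallest, middle, largest). -/
abbrev Move := ℕ × ℕ × ℕ × ℕ

/-- Firing chips `a < b < c` at node `i`: the smallest chip `a` goes to the left child `2i`,
the largest chip `c` goes to the right child `2i + 1`, and the middle chip `b` goes to the
parent (back to the root via the self-loop when `i = 1`). -/
def LFire (i a b c : ℕ) (f : LConfig) : LConfig := fun x =>
  if x = a then 2 * i else if x = b then parent i else if x = c then 2 * i + 1 else f x

/-- Applying a sequence of labeled firing moves. -/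
def LFireSeq : List Move → LConfig → LConfig
  | [], f => f
  | (i, a, b, c) :: l, f => LFireSeq l (LFire i a b c f)

/-- A sequence of labeled firing moves is legal (for chips labeled `1, …, M`) if at each step
the fired node is a positive integer and the three chosen chips `a < b < c` are labels in
`{1, …, M}` all currently located at that node. -/
def LLegalSeq (M : ℕ) : List Move → LConfig → Prop
  | [], _ => True
  | (i, a, b, c) :: l, f => 1 ≤ i ∧ 1 ≤ a ∧ c ≤ M ∧ a < b ∧ b < c ∧
      f a = i ∧ f b = i ∧ f c = i ∧ LLegalSeq M l (LFire i a b c f)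

/-- The set of chips (among labels `1, …, M`) held by node `v`. -/
def chipsAt (M : ℕ) (f : LConfig) (v : ℕ) : Finset ℕ :=
  (Finset.Icc 1 M).filter (fun x => f x = v)

/-- A labeled configuration is terminal if every node holds at most 2 chips. -/
def LTerminal (M : ℕ) (f : LConfig) : Prop := ∀ v, 1 ≤ v → (chipsAt M f v).card ≤ 2

/-- A labeled configuration is reachable if some finite sequence of legal firings from the
initial configuration (all chips `1, …, M` at the root) produces it. -/
def LReachable (M : ℕ) (f : LConfig) : Prop :=
  ∃ l, LLegalSeq M l (fun _ => 1) ∧ f = LFireSeq l (fun _ => 1)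

/-- Node `j` lies in the subtree of node `i` iff `⌊j / 2^t⌋ = i` for some `t ≥ 0`. -/
def inSubtree (i j : ℕ) : Prop := ∃ t, j / 2 ^ t = i

namespace ChipFiring

/-! ### Levels and heights -/

lemma level_child {v : ℕ} (hv : 1 ≤ v) {e : ℕ} (he : e ≤ 1) :
    level (2 * v + e) = level v + 1 := by
  unfold level
  have h : Nat.log 2 (2 * v + e) = Nat.log 2 v + 1 := by
    rw [Nat.log_of_one_lt_of_le (by norm_num) (by omega)]
    congr 2
    omega
  omega

lemma level_half {v : ℕ} (hv : 2 ≤ v) : level v = level (v / 2) + 1 := by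
  have := level_child (v := v / 2) (by omega) (e := v % 2) (by omega)
  rwa [Nat.div_add_mod] at this

lemma level_pos (v : ℕ) : 1 ≤ level v := by simp [level]

lemma level_one : level 1 = 1 := by simp [level]

lemma parent_one : parent 1 = 1 := by simp [parent]

lemma parent_of_two_le {v : ℕ} (hv : 2 ≤ v) : parent v = v / 2 := by
  simp [parent]; omega

lemma parent_child {v e : ℕ} (hv : 1 ≤ v) (he : e ≤ 1) : parent (2 * v + e) = v := by
  rw [parent_of_two_le (by omega)]; omega

lemma parent_pos {v : ℕ} (hv : 1 ≤ v) : 1 ≤ parent v := by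
  unfold parent; split_ifs <;> omega

/-- The height of node `v` in the tree with `n` levels (`0` on level `n` and, by truncation,
on all deeper levels). -/
def height (n v : ℕ) : ℕ := n - level v

lemma height_child {n v : ℕ} (hv : 1 ≤ v) {e : ℕ} (he : e ≤ 1) :
    height n (2 * v + e) = height n v - 1 := by
  unfold height; rw [level_child hv he]; omega

/-- The number of times node `v` fires in total: `2^(h+1) - h - 2` at height `h`. -/
def total (n v : ℕ) : ℤ := 2 ^ (height n v + 1) - height n v - 2

/-- The final number of chips at node `v`. -/
def finalCount (n v : ℕ) : ℤ := if level v ≤ n then 1 else 0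

lemma height_le_total (n v : ℕ) : (height n v : ℤ) ≤ total n v := by
  unfold total
  have : ∀ h : ℕ, 2 * (h : ℤ) + 2 ≤ 2 ^ (h + 1) := by
    intro h
    induction h with
    | zero => simp
    | succ k ih => rw [pow_succ]; push_cast; linarith
  linarith [this (height n v)]

lemma height_lt_total_of_two_le {n v : ℕ} (h : 2 ≤ height n v) : (height n v : ℤ) < total n v := by
  unfold total
  have : ∀ k : ℕ, 2 * ((k : ℤ) + 2) + 2 < 2 ^ (k + 2 + 1) := by
    intro h
    induction h with
    | zero => norm_num
    | succ k ih => rw [show k + 1 + 2 + 1 = (k + 2 + 1) + 1 by ring, pow_succ]; push_cast; linarith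
  obtain ⟨k, hk⟩ := Nat.exists_eq_add_of_le h
  have h2 := this k
  rw [hk, add_comm 2 k]; push_cast; linarith

/-! ### Runs -/

/-- A legal run of `N` firings starting from all chips `1, …, 2^n - 1` at the root. At time `τ`
the node `nd τ` fires: `S τ` goes to the child `2 i + d`, `B τ` to the parent and `O τ` to the
other child `2 i + (1 - d)`. For `d = 0` the chip `S τ` is the smallest one fired, for `d = 1` the
largest one; carrying `d` along proves both halves of the theorem at once. No order on labels is
recorded here. -/
structure Run (n N d : ℕ) (pos : ℕ → ℕ → ℕ) (nd S B O : ℕ → ℕ) : Prop where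
  hd : d ≤ 1
  start : ∀ x, pos 0 x = 1
  nd_pos : ∀ τ < N, 1 ≤ nd τ
  memS : ∀ τ < N, S τ ∈ Finset.Icc 1 (2 ^ n - 1)
  memB : ∀ τ < N, B τ ∈ Finset.Icc 1 (2 ^ n - 1)
  memO : ∀ τ < N, O τ ∈ Finset.Icc 1 (2 ^ n - 1)
  neSB : ∀ τ < N, S τ ≠ B τ
  neSO : ∀ τ < N, S τ ≠ O τ
  neBO : ∀ τ < N, B τ ≠ O τ
  atS : ∀ τ < N, pos τ (S τ) = nd τ
  atB : ∀ τ < N, pos τ (B τ) = nd τ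
  atO : ∀ τ < N, pos τ (O τ) = nd τ
  step : ∀ τ < N, ∀ x, pos (τ + 1) x = if x = S τ then 2 * nd τ + d else
    if x = B τ then parent (nd τ) else if x = O τ then 2 * nd τ + (1 - d) else pos τ x

/-- The number of firings of node `v` still to come at time `τ`: the total minus those done. -/
def rem (n : ℕ) (nd : ℕ → ℕ) : ℕ → ℕ → ℤ
  | 0, v => total n v
  | τ + 1, v => rem n nd τ v - if nd τ = v then 1 else 0

/-- The number of chips at node `v`. -/
def cnt (n : ℕ) (p : ℕ → ℕ) (v : ℕ) : ℤ := ((chipsAt (2 ^ n - 1) p v).card : ℤ)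

lemma cnt_eq_sum (n : ℕ) (p : ℕ → ℕ) (v : ℕ) :
    cnt n p v = ∑ x ∈ Finset.Icc 1 (2 ^ n - 1), if p x = v then (1 : ℤ) else 0 := by
  unfold cnt chipsAt
  rw [Finset.card_filter]; push_cast; rfl

lemma rem_antitone (n : ℕ) (nd : ℕ → ℕ) (v : ℕ) : Antitone fun τ => rem n nd τ v := by
  apply antitone_nat_of_succ_le
  intro τ
  simp only [rem]
  split_ifs <;> linarith

/-- A node whose number of remaining firings drops to `k` fired when that number was `k + 1`. -/
lemma exists_fire {n : ℕ} {nd : ℕ → ℕ} {v : ℕ} {k : ℤ} (h0 : k < total n v) :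
    ∀ τ, rem n nd τ v ≤ k → ∃ σ < τ, nd σ = v ∧ rem n nd σ v = k + 1 := by
  intro τ
  induction τ with
  | zero => intro h; simp only [rem] at h; omega
  | succ τ ih =>
    intro h
    by_cases h' : rem n nd τ v ≤ k
    · obtain ⟨σ, h1, h2⟩ := ih h'
      exact ⟨σ, by omega, h2⟩
    · simp only [rem] at h
      split_ifs at h with hv
      · exact ⟨τ, by omega, hv, by omega⟩
      · omega

namespace Run

variable {n N d : ℕ} {pos : ℕ → ℕ → ℕ} {nd S B O : ℕ → ℕ}

/-! ### Counting chips -/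

lemma cnt_succ (R : Run n N d pos nd S B O) {τ : ℕ} (hτ : τ < N) (v : ℕ) :
    cnt n (pos (τ + 1)) v = cnt n (pos τ) v - 3 * (if nd τ = v then 1 else 0)
      + (if 2 * nd τ + d = v then 1 else 0) + (if parent (nd τ) = v then 1 else 0)
      + (if 2 * nd τ + (1 - d) = v then 1 else 0) := by
  have h1 := R.neSB τ hτ
  have h2 := R.neSO τ hτ
  have h3 := R.neBO τ hτ
  have key : cnt n (pos (τ + 1)) v - cnt n (pos τ) v =
      ∑ x ∈ ({S τ, B τ, O τ} : Finset ℕ), ((if pos (τ + 1) x = v then (1 : ℤ) else 0)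
        - if pos τ x = v then 1 else 0) := by
    rw [cnt_eq_sum, cnt_eq_sum, ← Finset.sum_sub_distrib]
    symm
    apply Finset.sum_subset
    · intro x hx
      simp only [Finset.mem_insert, Finset.mem_singleton] at hx
      rcases hx with rfl | rfl | rfl
      exacts [R.memS τ hτ, R.memB τ hτ, R.memO τ hτ]
    · intro x _ hx
      simp only [Finset.mem_insert, Finset.mem_singleton, not_or] at hx
      rw [R.step τ hτ x, if_neg hx.1, if_neg hx.2.1, if_neg hx.2.2, sub_self]
  rw [Finset.sum_insert (by simp [h1, h2]), Finset.sum_insert (by simp [h3]),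
    Finset.sum_singleton, R.step τ hτ (S τ), R.step τ hτ (B τ), R.step τ hτ (O τ),
    R.atS τ hτ, R.atB τ hτ, R.atO τ hτ, if_pos rfl, if_neg h1.symm, if_pos rfl,
    if_neg h2.symm, if_neg h3.symm, if_pos rfl] at key
  linarith

lemma total_balance {v : ℕ} (hn : 1 ≤ n) (hv : 1 ≤ v) :
    (if v = 1 then (2 : ℤ) ^ n - 1 else 0) = finalCount n v + 3 * total n v - total n (parent v)
      - total n (2 * v) - total n (2 * v + 1) := by
  have hl : height n (2 * v) = height n v - 1 := height_child (e := 0) hv (by omega)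
  have hr : height n (2 * v + 1) = height n v - 1 := height_child (e := 1) hv (by omega)
  unfold total finalCount
  rw [hl, hr]
  by_cases h1 : v = 1
  · subst h1
    rw [parent_one, if_pos rfl, level_one, if_pos hn]
    have : height n 1 = n - 1 := by rw [height, level_one]
    rw [this]
    rcases n with _ | _ | k
    · omega
    · norm_num
    · simp only [Nat.add_sub_cancel]; push_cast; ring
  · have hp : level v = level (parent v) + 1 := by
      rw [parent_of_two_le (by omega)]; exact level_half (by omega)
    have := level_pos (parent v)
    rw [if_neg h1]
    unfold height
    rw [hp]
    generalize level (parent v) = m at *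
    by_cases hm : m + 1 ≤ n
    · rw [if_pos hm]
      obtain ⟨k, rfl⟩ := Nat.exists_eq_add_of_le hm
      rw [show m + 1 + k - m = k + 1 by omega, show m + 1 + k - (m + 1) = k by omega]
      rcases k with _ | k
      · norm_num
      · simp only [Nat.add_sub_cancel]; push_cast; ring
    · rw [if_neg hm, show n - m = 0 by omega, show n - (m + 1) = 0 by omega]
      norm_num

/-- The number of chips at a node is determined by the firings still to come nearby. -/
lemma cnt_eq (R : Run n N d pos nd S B O) (hn : 1 ≤ n) {v : ℕ} (hv : 1 ≤ v) : ∀ τ ≤ N,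
    cnt n (pos τ) v = finalCount n v + 3 * rem n nd τ v - rem n nd τ (parent v)
      - rem n nd τ (2 * v) - rem n nd τ (2 * v + 1) := by
  intro τ
  induction τ with
  | zero =>
    intro _
    simp only [rem]
    rw [← total_balance hn hv, cnt_eq_sum]
    simp only [R.start]
    have : 1 ≤ 2 ^ n := Nat.one_le_two_pow
    by_cases h1 : v = 1
    · subst h1; simp
    · rw [if_neg h1, if_neg (fun h => h1 h.symm)]; simp
  | succ τ ih =>
    intro hτ
    have hi := R.nd_pos τ (by omega)
    rw [R.cnt_succ (by omega) v, ih (by omega)]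
    simp only [rem]
    have hd := R.hd
    have e1 : (if 2 * nd τ + d = v then (1 : ℤ) else 0) + (if 2 * nd τ + (1 - d) = v then 1 else 0)
        + (if parent (nd τ) = v then 1 else 0) =
        (if nd τ = parent v then 1 else 0) + (if nd τ = 2 * v then 1 else 0)
          + (if nd τ = 2 * v + 1 then 1 else 0) := by
      generalize nd τ = i at *
      unfold parent
      interval_cases d <;> split_ifs <;> omega
    linarith

lemma fired_subset (R : Run n N d pos nd S B O) {τ : ℕ} (hτ : τ < N) :
    ({S τ, B τ, O τ} : Finset ℕ) ⊆ chipsAt (2 ^ n - 1) (pos τ) (nd τ) := by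
  intro x hx
  simp only [Finset.mem_insert, Finset.mem_singleton] at hx
  unfold chipsAt
  rw [Finset.mem_filter]
  rcases hx with rfl | rfl | rfl
  exacts [⟨R.memS τ hτ, R.atS τ hτ⟩, ⟨R.memB τ hτ, R.atB τ hτ⟩, ⟨R.memO τ hτ, R.atO τ hτ⟩]

lemma three_le_cnt (R : Run n N d pos nd S B O) {τ : ℕ} (hτ : τ < N) :
    3 ≤ cnt n (pos τ) (nd τ) := by
  have := Finset.card_le_card (R.fired_subset hτ)
  rw [Finset.card_eq_three.mpr ⟨_, _, _, R.neSB τ hτ, R.neSO τ hτ, R.neBO τ hτ, rfl⟩] at this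
  unfold cnt
  exact_mod_cast this

lemma finalCount_le (n v : ℕ) : finalCount n v ≤ 1 := by
  unfold finalCount; split_ifs <;> norm_num

/-- No node fires more often than its total (the least action principle). -/
lemma rem_nonneg (R : Run n N d pos nd S B O) (hn : 1 ≤ n) :
    ∀ τ ≤ N, ∀ v, 1 ≤ v → 0 ≤ rem n nd τ v := by
  intro τ
  induction τ with
  | zero =>
    intro _ v _
    simp only [rem]
    linarith [height_le_total n v, Int.natCast_nonneg (height n v)]
  | succ τ ih =>
    intro hτ v hv
    have ih := ih (by omega)
    have h0 := ih v hv
    simp only [rem]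
    split_ifs with h
    · subst h
      have h1 := R.three_le_cnt (τ := τ) (by omega)
      rw [R.cnt_eq hn hv τ (by omega)] at h1
      have h2 := ih _ (parent_pos hv)
      have h3 := ih (2 * nd τ) (by omega)
      have h4 := ih (2 * nd τ + 1) (by omega)
      have h5 := finalCount_le n (nd τ)
      omega
    · omega

lemma rem_eq_zero_of_height (R : Run n N d pos nd S B O) (hn : 1 ≤ n) {τ v : ℕ} (hτ : τ ≤ N)
    (hv : 1 ≤ v) (h : height n v = 0) : rem n nd τ v = 0 := by
  apply le_antisymm _ (R.rem_nonneg hn τ hτ v hv)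
  have h1 : rem n nd τ v ≤ rem n nd 0 v := rem_antitone n nd v (Nat.zero_le τ)
  simp only [rem] at h1
  unfold total at h1
  rw [h] at h1
  simpa using h1

/-! ### The endgame -/

/-- The two invariants that force the order of the last firings: a non-root node `v` of height
`h` does not start its last `h` firings too early (it waits for its parent), and a parent with at
most `h` firings left is not ahead of `v`. -/
lemma invariants (R : Run n N d pos nd S B O) (hn : 1 ≤ n) : ∀ τ ≤ N, ∀ v, 2 ≤ v →
    (min (height n v : ℤ) (rem n nd τ (v / 2) - 1) ≤ rem n nd τ v) ∧
    (rem n nd τ (v / 2) ≤ height n v → rem n nd τ v ≤ rem n nd τ (v / 2)) := by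
  intro τ
  induction τ with
  | zero =>
    intro hτ v hv
    refine ⟨?_, ?_⟩
    · simp only [rem]; exact le_trans (min_le_left _ _) (height_le_total n v)
    · intro h
      by_cases h0 : height n v = 0
      · rw [R.rem_eq_zero_of_height hn hτ (by omega) h0]
        exact R.rem_nonneg hn 0 hτ _ (by omega)
      · exfalso
        have hp : height n (v / 2) = height n v + 1 := by
          have := level_half hv
          unfold height at *; omega
        have := height_lt_total_of_two_le (n := n) (v := v / 2) (by omega)
        simp only [rem] at h
        omega
  | succ τ ih =>
    intro hτ v hv
    have ih := ih (by omega)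
    have hnn := R.rem_nonneg hn (τ + 1) hτ
    have hi := R.nd_pos τ (by omega)
    have hc := R.three_le_cnt (τ := τ) (by omega)
    rw [R.cnt_eq hn hi τ (by omega)] at hc
    have hf := finalCount_le n (nd τ)
    have hl := (ih (2 * nd τ) (by omega)).1
    have hr := (ih (2 * nd τ + 1) (by omega)).1
    rw [show 2 * nd τ / 2 = nd τ by omega, show height n (2 * nd τ) = height n (nd τ) - 1 from
      height_child (e := 0) hi (by omega)] at hl
    rw [show (2 * nd τ + 1) / 2 = nd τ by omega, show height n (2 * nd τ + 1) = height n (nd τ) - 1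
      from height_child (e := 1) hi (by omega)] at hr
    obtain ⟨ihA, ihB⟩ := ih v hv
    by_cases hvi : nd τ = v
    · have hvp : nd τ ≠ v / 2 := by omega
      rw [parent_of_two_le (by omega)] at hc
      subst hvi
      simp only [rem, if_neg hvp, if_true]
      refine ⟨?_, fun h => by have := ihB (by omega); omega⟩
      omega
    · by_cases hvp : nd τ = v / 2
      · simp only [rem, if_neg hvi, if_pos hvp]
        refine ⟨by omega, fun h => ?_⟩
        by_cases h0 : height n v = 0
        · have := R.rem_eq_zero_of_height hn (τ := τ) (by omega) (by omega) h0
          have h2 := hnn (v / 2) (by omega)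
          simp only [rem, if_pos hvp] at h2
          omega
        have hh : height n v = height n (nd τ) - 1 := by
          have := level_half hv
          rw [hvp]
          unfold height at *; omega
        have hpar : rem n nd τ (nd τ) ≤ rem n nd τ (parent (nd τ)) := by
          by_cases h1 : nd τ = 1
          · rw [h1, parent_one]
          · rw [parent_of_two_le (by omega)]
            have := (ih (nd τ) (by omega)).2
            rw [← hvp] at h
            omega
        rw [← hvp] at h ⊢
        have hv2 : v = 2 * nd τ ∨ v = 2 * nd τ + 1 := by omega
        rcases hv2 with h2 | h2 <;> simp only [← h2] at hc hl hr <;> omega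
      · simp only [rem, if_neg hvi, if_neg hvp, sub_zero]
        exact ⟨ihA, ihB⟩

/-- When a node of height `h` makes one of its last `h` firings, say the `j`-th from the end, its
parent also has `j` firings left, its children have `j - 1`, and it holds exactly three chips. -/
lemma endgame (R : Run n N d pos nd S B O) (hn : 1 ≤ n) {τ : ℕ} (hτ : τ < N)
    (hj : rem n nd τ (nd τ) ≤ height n (nd τ)) :
    rem n nd τ (parent (nd τ)) = rem n nd τ (nd τ) ∧
    rem n nd τ (2 * nd τ) = rem n nd τ (nd τ) - 1 ∧
    rem n nd τ (2 * nd τ + 1) = rem n nd τ (nd τ) - 1 ∧ cnt n (pos τ) (nd τ) = 3 := by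
  have hi := R.nd_pos τ hτ
  have hc := R.three_le_cnt hτ
  have hce := R.cnt_eq hn hi τ (by omega)
  have ih := R.invariants hn τ (by omega)
  have hf := finalCount_le n (nd τ)
  have h1 := R.rem_nonneg hn (τ + 1) (by omega) (nd τ) hi
  simp only [rem, if_true] at h1
  have hl := (ih (2 * nd τ) (by omega)).1
  have hr := (ih (2 * nd τ + 1) (by omega)).1
  rw [show 2 * nd τ / 2 = nd τ by omega, show height n (2 * nd τ) = height n (nd τ) - 1 from
    height_child (e := 0) hi (by omega)] at hl
  rw [show (2 * nd τ + 1) / 2 = nd τ by omega, show height n (2 * nd τ + 1) = height n (nd τ) - 1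
    from height_child (e := 1) hi (by omega)] at hr
  have hpar : rem n nd τ (nd τ) ≤ rem n nd τ (parent (nd τ)) := by
    by_cases h1 : nd τ = 1
    · rw [h1, parent_one]
    · rw [parent_of_two_le (by omega)]
      have := (ih (nd τ) (by omega)).2
      omega
  omega

/-- In a terminal configuration every node has fired its total number of times: otherwise a
deepest node with the most firings left would hold at least three chips. -/
lemma rem_final (R : Run n N d pos nd S B O) (hn : 1 ≤ n)
    (hT : LTerminal (2 ^ n - 1) (pos N)) : ∀ v, 1 ≤ v → rem n nd N v = 0 := by
  by_contra! hcon
  obtain ⟨v₀, hv₀, hne⟩ := hcon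
  have hnn := R.rem_nonneg hn N le_rfl
  have hlt : ∀ v, 1 ≤ v → rem n nd N v ≠ 0 → v < 2 ^ n := by
    intro v hv h
    by_contra hge
    apply h
    apply R.rem_eq_zero_of_height hn le_rfl hv
    have : n ≤ Nat.log 2 v := Nat.le_log_of_pow_le (by norm_num) (by omega)
    unfold height level; omega
  -- Lexicographic maximum of the firings left and the node number; children have larger numbers.
  obtain ⟨v, hv, hmax⟩ := Finset.exists_max_image (Finset.Ico 1 (2 ^ n))
    (fun v => toLex (rem n nd N v, v)) ⟨v₀, by simp [hv₀, hlt v₀ hv₀ hne]⟩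
  have hv1 := (Finset.mem_Ico.mp hv).1
  have hmax' : ∀ w, 1 ≤ w → rem n nd N w ≠ 0 →
      rem n nd N w ≤ rem n nd N v ∧ (v < w → rem n nd N w < rem n nd N v) := by
    intro w hw h
    have := hmax w (by simp [hw, hlt w hw h])
    rw [Prod.Lex.le_iff] at this
    simp only [ofLex_toLex] at this
    constructor
    · omega
    · intro h; omega
  have hpos : 1 ≤ rem n nd N v := by
    have := (hmax' v₀ hv₀ hne).1
    have := hnn v₀ hv₀
    omega
  have hc := R.cnt_eq hn hv1 N le_rfl
  have hle : cnt n (pos N) v ≤ 2 := by unfold cnt; exact_mod_cast hT v hv1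
  have hp : rem n nd N (parent v) ≤ rem n nd N v := by
    by_cases h : rem n nd N (parent v) = 0
    · omega
    · exact (hmax' _ (parent_pos hv1) h).1
  have hl : rem n nd N (2 * v) < rem n nd N v := by
    by_cases h : rem n nd N (2 * v) = 0
    · omega
    · exact (hmax' _ (by omega) h).2 (by omega)
  have hr : rem n nd N (2 * v + 1) < rem n nd N v := by
    by_cases h : rem n nd N (2 * v + 1) = 0
    · omega
    · exact (hmax' _ (by omega) h).2 (by omega)
  have hfc : finalCount n v = 1 := by
    unfold finalCount
    rw [if_pos]
    by_contra hlv
    have := R.rem_eq_zero_of_height hn le_rfl hv1 (by unfold height; omega)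
    omega
  omega

lemma cnt_final (R : Run n N d pos nd S B O) (hn : 1 ≤ n)
    (hT : LTerminal (2 ^ n - 1) (pos N)) {v : ℕ} (hv : 1 ≤ v) :
    cnt n (pos N) v = finalCount n v := by
  have h := R.rem_final hn hT
  rw [R.cnt_eq hn hv N le_rfl, h v hv, h _ (parent_pos hv), h _ (by omega), h _ (by omega)]
  ring

/-! ### Movement of chips -/

lemma pos_S (R : Run n N d pos nd S B O) {τ : ℕ} (hτ : τ < N) :
    pos (τ + 1) (S τ) = 2 * nd τ + d := by
  rw [R.step τ hτ, if_pos rfl]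

lemma pos_B (R : Run n N d pos nd S B O) {τ : ℕ} (hτ : τ < N) :
    pos (τ + 1) (B τ) = parent (nd τ) := by
  rw [R.step τ hτ, if_neg (R.neSB τ hτ).symm, if_pos rfl]

lemma eq_of_moved (R : Run n N d pos nd S B O) {τ x : ℕ} (hτ : τ < N)
    (h : pos (τ + 1) x ≠ pos τ x) : nd τ = pos τ x ∧ (x = S τ ∨ x = B τ ∨ x = O τ) := by
  by_cases h1 : x = S τ
  · subst h1; exact ⟨(R.atS τ hτ).symm, Or.inl rfl⟩
  by_cases h2 : x = B τ
  · subst h2; exact ⟨(R.atB τ hτ).symm, Or.inr (Or.inl rfl)⟩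
  by_cases h3 : x = O τ
  · subst h3; exact ⟨(R.atO τ hτ).symm, Or.inr (Or.inr rfl)⟩
  · rw [R.step τ hτ, if_neg h1, if_neg h2, if_neg h3] at h
    exact absurd rfl h

/-- A chip stays at its node as long as the firings of this node do not involve it. -/
lemma stays (R : Run n N d pos nd S B O) {x v τ₁ : ℕ} (h1 : pos τ₁ x = v) :
    ∀ τ₂, τ₁ ≤ τ₂ → τ₂ ≤ N →
    (∀ τ, τ₁ ≤ τ → τ < τ₂ → nd τ = v → x ≠ S τ ∧ x ≠ B τ ∧ x ≠ O τ) → pos τ₂ x = v := by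
  intro τ₂ h12
  induction τ₂, h12 using Nat.le_induction with
  | base => intro _ _; exact h1
  | succ τ₂ h12 ih =>
    intro hN h
    have ih := ih (by omega) (fun τ ha hb => h τ ha (by omega))
    by_contra hne
    obtain ⟨ha, hb⟩ := R.eq_of_moved (τ := τ₂) (x := x) (by omega) (by rw [ih]; exact hne)
    have := h τ₂ h12 (by omega) (by rw [ha, ih])
    tauto

/-- If a firing node holds exactly three chips, these are the ones fired. -/
lemma eq_of_cnt_eq_three (R : Run n N d pos nd S B O) {τ x : ℕ} (hτ : τ < N)
    (h3 : cnt n (pos τ) (nd τ) = 3) (hx : x ∈ Finset.Icc 1 (2 ^ n - 1)) (hp : pos τ x = nd τ) :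
    x = S τ ∨ x = B τ ∨ x = O τ := by
  have heq := Finset.eq_of_subset_of_card_le (R.fired_subset hτ) (by
    rw [Finset.card_eq_three.mpr ⟨_, _, _, R.neSB τ hτ, R.neSO τ hτ, R.neBO τ hτ, rfl⟩]
    unfold cnt at h3
    exact_mod_cast h3.le)
  have : x ∈ chipsAt (2 ^ n - 1) (pos τ) (nd τ) := by
    unfold chipsAt; exact Finset.mem_filter.mpr ⟨hx, hp⟩
  rw [← heq] at this
  simpa using this

/-- A chip enters the subtree of `v` only by moving from the parent of `v` to `v`. -/
lemma enters_subtree (R : Run n N d pos nd S B O) {τ x v : ℕ} (hτ : τ < N)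
    (h : inSubtree v (pos (τ + 1) x)) (h' : ¬ inSubtree v (pos τ x)) :
    v = 2 * nd τ + d ∧ x = S τ ∨ v = 2 * nd τ + (1 - d) ∧ x = O τ := by
  have hd := R.hd
  have child : ∀ e ≤ 1, inSubtree v (2 * nd τ + e) → ¬ inSubtree v (nd τ) →
      v = 2 * nd τ + e := by
    rintro e he ⟨t, ht⟩ hn
    rcases t with _ | t
    · simpa using ht.symm
    · refine absurd ⟨t, ?_⟩ hn
      rwa [pow_succ', ← Nat.div_div_eq_div_mul, show (2 * nd τ + e) / 2 = nd τ by omega] at ht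
  rcases (R.eq_of_moved hτ (x := x) (fun he => h' (he ▸ h))) with ⟨hnd, rfl | rfl | rfl⟩
  · rw [← hnd] at h'
    rw [R.pos_S hτ] at h
    exact Or.inl ⟨child d hd h h', rfl⟩
  · exfalso
    rw [← hnd] at h'
    rw [R.pos_B hτ] at h
    unfold parent at h
    split_ifs at h with h1
    · exact h' (h1 ▸ h)
    · obtain ⟨t, ht⟩ := h
      exact h' ⟨t + 1, by rwa [pow_succ', ← Nat.div_div_eq_div_mul]⟩
  · rw [← hnd] at h'
    rw [R.step τ hτ, if_neg (R.neSO τ hτ).symm, if_neg (R.neBO τ hτ).symm, if_pos rfl] at h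
    exact Or.inr ⟨child (1 - d) (by omega) h h', rfl⟩

/-! ### Labels

Throughout, `P` is a set of labels such that a firing with `S τ ∈ P` has `B τ ∈ P`, and one with
`B τ ∈ P` has `O τ ∈ P`: an up-set of labels if `d = 0`, a down-set if `d = 1`. -/

variable {P : ℕ → Prop}

/-- If all firings of `v` so far involved only chips in `P`, then the proper descendants of `v` hold
only chips in `P`, since all their chips came through `v`. -/
lemma descendants (R : Run n N d pos nd S B O)
    (hP : ∀ τ < N, (P (S τ) → P (B τ)) ∧ (P (B τ) → P (O τ))) {v : ℕ} (hv : 1 ≤ v) :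
    ∀ τ ≤ N, (∀ σ < τ, nd σ = v → P (S σ)) →
      ∀ x, inSubtree v (pos τ x) → pos τ x ≠ v → P x := by
  intro τ
  induction τ with
  | zero =>
    rintro _ _ x ⟨t, ht⟩ hne
    rw [R.start] at ht hne
    rcases t with _ | t
    · exact absurd (by simpa using ht) hne
    · rw [Nat.div_eq_of_lt (Nat.one_lt_two_pow (by omega))] at ht; omega
  | succ τ ih =>
    intro hτ hS x hx hne
    have ih := ih (by omega) (fun σ hσ => hS σ (by omega)) x
    have hS := hS τ (by omega)
    have hP := hP τ (by omega)
    by_cases hin : inSubtree v (pos τ x)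
    · by_cases hpv : pos τ x = v
      · obtain ⟨h1, h2⟩ := R.eq_of_moved (x := x) (τ := τ) (by omega) (by rw [hpv]; exact hne)
        have := hS (by rw [h1, hpv])
        rcases h2 with rfl | rfl | rfl <;> tauto
      · exact ih hin hpv
    · exfalso
      rcases R.enters_subtree (by omega) hx hin with ⟨h1, rfl⟩ | ⟨h1, rfl⟩
      · exact hne (by rw [R.pos_S (by omega), h1])
      · exact hne (by rw [R.step τ (by omega), if_neg (R.neSO τ (by omega)).symm,
          if_neg (R.neBO τ (by omega)).symm, if_pos rfl, h1])

/-- If all but the last `i` firings of `v` involve only chips in `P`, and `i` is less than the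
height of `v`, then `v` holds only chips in `P` while it has `i` firings left.

By `endgame`, after the firing that leaves `v` with `i` firings the whole subtree of `v` is in `P`,
and until the next firing of `v` only one chip enters it, from the firing of the parent with
`i + 1` firings left. If `v` is on the `O`-side of its parent, this chip is at least as
extreme as the middle chip last sent up by `v`, hence in `P`. If `v` is on the `S`-side, all earlier
firings of the parent are within `P`, and the statement for the parent and `i + 1` applies. -/
lemma waiting (R : Run n N d pos nd S B O) (hn : 1 ≤ n)
    (hP : ∀ τ < N, (P (S τ) → P (B τ)) ∧ (P (B τ) → P (O τ))) : ∀ v, 1 ≤ v → ∀ i : ℕ,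
    i + 1 ≤ height n v → (∀ τ < N, nd τ = v → (i : ℤ) < rem n nd τ v → P (S τ)) →
    ∀ τ ≤ N, rem n nd τ v = i → ∀ x ∈ Finset.Icc 1 (2 ^ n - 1), pos τ x = v → P x := by
  intro v
  induction v using Nat.strong_induction_on with
  | _ v IH =>
  intro hv i hi hS τ₁ hτ₁ hr₁ x₁ hx₁ hpx₁
  have anti := fun w => rem_antitone n nd w
  -- `τ₀` is the time of the firing of `v` that leaves it with `i` firings.
  obtain ⟨τ₀, h01, hnd₀, hr₀⟩ := exists_fire (n := n) (nd := nd) (v := v) (k := i)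
    (by have := height_le_total n v; omega) τ₁ hr₁.le
  have hτ₀ : τ₀ < N := by omega
  obtain ⟨hpar₀, -, -, hc₀⟩ := R.endgame hn hτ₀ (by rw [hnd₀, hr₀]; exact_mod_cast hi)
  rw [hnd₀, hr₀] at hpar₀
  have early : ∀ τ, τ ≤ τ₀ → nd τ = v → P (S τ) ∧ P (B τ) ∧ P (O τ) := by
    intro τ hle hndτ
    have h1 : rem n nd τ₀ v ≤ rem n nd τ v := anti v hle
    have h2 := hS τ (by omega) hndτ (by omega)
    have h3 := hP τ (by omega)
    tauto
  have atv₀ : ∀ x ∈ Finset.Icc 1 (2 ^ n - 1), pos τ₀ x = v → P x := by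
    intro x hx hpx
    have := early τ₀ le_rfl hnd₀
    rcases R.eq_of_cnt_eq_three hτ₀ hc₀ hx (by rw [hpx, hnd₀]) with rfl | rfl | rfl <;> tauto
  have main : ∀ τ, τ₀ ≤ τ → τ ≤ τ₁ → ∀ x ∈ Finset.Icc 1 (2 ^ n - 1),
      inSubtree v (pos τ x) → P x := by
    intro τ h0
    induction τ, h0 using Nat.le_induction with
    | base =>
      intro _ x hx hin
      by_cases hpx : pos τ₀ x = v
      · exact atv₀ x hx hpx
      · exact R.descendants hP hv τ₀ (by omega)
          (fun σ hσ h => (early σ hσ.le h).1) x hin hpx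
    | succ τ h0 ih =>
      intro h1 x hx hin
      have hτ : τ < N := by omega
      by_cases hin' : inSubtree v (pos τ x)
      · exact ih (by omega) x hx hin'
      have hent := R.enters_subtree hτ hin hin'
      have hd := R.hd
      have hip := R.nd_pos τ hτ
      obtain ⟨hv2, hpv⟩ : 2 ≤ v ∧ nd τ = v / 2 := by
        rcases hent with ⟨h, -⟩ | ⟨h, -⟩ <;> omega
      have hlt : τ₀ < τ := by
        rcases Nat.lt_or_ge τ₀ τ with h | h
        · exact h
        · obtain rfl : τ = τ₀ := by omega
          omega
      have hrv : rem n nd τ v = i := by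
        have ha : rem n nd τ v ≤ rem n nd (τ₀ + 1) v := anti v hlt
        have hb : rem n nd τ₁ v ≤ rem n nd τ v := anti v (by omega)
        simp only [rem, if_pos hnd₀] at ha
        omega
      rw [parent_of_two_le hv2, ← hpv] at hpar₀
      have hrp : rem n nd τ (nd τ) ≤ i + 1 := by
        rw [← hpar₀]; exact anti (nd τ) h0
      have hhp : height n (nd τ) = height n v + 1 := by
        have := level_half hv2
        rw [hpv]; unfold height at *; omega
      obtain ⟨-, hl, hr, hc⟩ := R.endgame hn hτ (by omega)
      have hrp' : rem n nd τ (nd τ) = i + 1 := by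
        have : v = 2 * nd τ ∨ v = 2 * nd τ + 1 := by omega
        rcases this with h | h
        · rw [← h] at hl; omega
        · rw [← h] at hr; omega
      rcases hent with ⟨hside, rfl⟩ | ⟨hside, rfl⟩
      · refine IH (nd τ) (by omega) hip (i + 1) (by omega) ?_ τ hτ.le (by rw [hrp']; push_cast; rfl)
          _ hx (R.atS τ hτ)
        intro τ₂ hτ₂ hnd₂ hr₂
        by_contra hnot
        have h20 : τ₂ < τ₀ := by
          by_contra hge
          have : rem n nd τ₂ (nd τ) ≤ rem n nd τ₀ (nd τ) := anti (nd τ) (by omega)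
          push_cast at hr₂
          omega
        refine hnot (atv₀ _ (R.memS τ₂ hτ₂) (R.stays (τ₁ := τ₂ + 1) ?_ τ₀ h20 hτ₀.le ?_))
        · rw [R.pos_S hτ₂, hnd₂, hside]
        · intro σ _ hσ hndσ
          have := early σ hσ.le hndσ
          refine ⟨?_, ?_, ?_⟩ <;> intro he <;> rw [he] at hnot <;> tauto
      · have hB : pos τ (B τ₀) = nd τ := by
          refine R.stays (τ₁ := τ₀ + 1) ?_ τ hlt hτ.le ?_
          · rw [R.pos_B hτ₀, hnd₀, parent_of_two_le hv2, hpv]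
          · intro σ h3 h4 h5
            exfalso
            have ha : rem n nd τ (nd τ) ≤ rem n nd (σ + 1) (nd τ) := anti (nd τ) h4
            have hb : rem n nd σ (nd τ) ≤ rem n nd τ₀ (nd τ) := anti (nd τ) (by omega)
            simp only [rem, if_pos h5] at ha
            omega
        have hPB := (early τ₀ le_rfl hnd₀).2.1
        have h6 := hP τ hτ
        rcases R.eq_of_cnt_eq_three hτ hc (R.memB τ₀ hτ₀) hB with h | h | h <;>
          rw [h] at hPB <;> tauto
  exact main τ₁ h01.le le_rfl x₁ hx₁ ⟨0, by simp [hpx₁]⟩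

/-- If the final chip of the bottom straight `d`-side descendant of `v` is in `P`, then every
chip that is ever at `v` is in `P`. -/
lemma visitors (R : Run n N d pos nd S B O) (hn : 1 ≤ n)
    (hT : LTerminal (2 ^ n - 1) (pos N))
    (hP : ∀ τ < N, (P (S τ) → P (B τ)) ∧ (P (B τ) → P (O τ))) {y : ℕ}
    (hy : y ∈ Finset.Icc 1 (2 ^ n - 1)) (hPy : P y) : ∀ h v, 1 ≤ v → level v + h = n →
    pos N y = 2 ^ h * (v + d) - d →
    ∀ τ ≤ N, ∀ x ∈ Finset.Icc 1 (2 ^ n - 1), pos τ x = v → P x := by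
  intro h
  induction h with
  | zero =>
    intro v hv hl hpy τ hτ x hx hpx
    have hpy : pos N y = v := by rw [hpy]; simp
    have hpx : pos N x = v := by
      refine R.stays hpx N hτ le_rfl ?_
      intro σ _ hσ hnd
      exfalso
      have h0 : height n v = 0 := by unfold height; omega
      have h1 := R.rem_eq_zero_of_height hn (τ := σ) hσ.le hv h0
      have h2 := R.rem_eq_zero_of_height hn (τ := σ + 1) hσ hv h0
      simp only [rem, if_pos hnd] at h2
      omega
    have hc := R.cnt_final hn hT hv
    unfold cnt finalCount at hc
    rw [if_pos (by omega)] at hc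
    have hc : (chipsAt (2 ^ n - 1) (pos N) v).card ≤ 1 := by exact_mod_cast hc.le
    rw [Finset.card_le_one] at hc
    rw [hc x (by simp only [chipsAt, Finset.mem_filter]; exact ⟨hx, hpx⟩) y
      (by simp only [chipsAt, Finset.mem_filter]; exact ⟨hy, hpy⟩)]
    exact hPy
  | succ h ih =>
    intro v hv hl hpy
    have hd := R.hd
    have hw := ih (2 * v + d) (by omega) (by rw [level_child hv hd]; omega) (by
      rw [hpy, pow_succ]; congr 1; ring)
    have hS : ∀ τ < N, nd τ = v → P (S τ) := fun τ hτ hnd =>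
      hw (τ + 1) hτ _ (R.memS τ hτ) (by rw [R.pos_S hτ, hnd])
    have hfin : ∀ x ∈ Finset.Icc 1 (2 ^ n - 1), pos N x = v → P x :=
      R.waiting hn hP v hv 0 (by unfold height; omega) (fun τ hτ hnd _ => hS τ hτ hnd) N le_rfl
        (by rw [R.rem_final hn hT v hv]; rfl)
    intro τ hτ x hx hpx
    by_contra hnot
    refine hnot (hfin x hx (R.stays hpx N hτ le_rfl ?_))
    intro σ _ hσ hnd
    have h1 := hS σ hσ hnd
    have h2 := hP σ hσ
    refine ⟨?_, ?_, ?_⟩ <;> intro he <;> rw [he] at hnot <;> tauto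

/-- If the final chip of the bottom straight `d`-side descendant of `v` is in `P`, then so are
all final chips in the subtree of `v`. -/
lemma subtree_final (R : Run n N d pos nd S B O) (hn : 1 ≤ n)
    (hT : LTerminal (2 ^ n - 1) (pos N))
    (hP : ∀ τ < N, (P (S τ) → P (B τ)) ∧ (P (B τ) → P (O τ))) {x y v : ℕ} (hv : 1 ≤ v)
    (hl : level v ≤ n) (hx : x ∈ Finset.Icc 1 (2 ^ n - 1)) (hy : y ∈ Finset.Icc 1 (2 ^ n - 1))
    (hPy : P y) (hpy : pos N y = 2 ^ (n - level v) * (v + d) - d)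
    (hin : inSubtree v (pos N x)) : P x := by
  have key := R.visitors hn hT hP hy hPy (n - level v) v hv (by omega) hpy
  by_cases hpx : pos N x = v
  · exact key N le_rfl x hx hpx
  · exact R.descendants hP hv N le_rfl
      (fun σ hσ hnd => key σ hσ.le _ (R.memS σ hσ) (by rw [R.atS σ hσ, hnd])) x hin hpx

end Run

/-! ### Runs from firing sequences -/

/-- A legal firing sequence, started at any configuration, as time-indexed functions. -/
lemma exists_trace (M : ℕ) : ∀ (l : List Move) (g : LConfig), LLegalSeq M l g →
    ∃ (N : ℕ) (pos : ℕ → ℕ → ℕ) (nd A B C : ℕ → ℕ), pos 0 = g ∧ pos N = LFireSeq l g ∧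
      ∀ τ < N, 1 ≤ nd τ ∧ 1 ≤ A τ ∧ C τ ≤ M ∧ A τ < B τ ∧ B τ < C τ ∧ pos τ (A τ) = nd τ ∧
        pos τ (B τ) = nd τ ∧ pos τ (C τ) = nd τ ∧
        pos (τ + 1) = LFire (nd τ) (A τ) (B τ) (C τ) (pos τ) := by
  intro l
  induction l with
  | nil =>
    exact fun g _ => ⟨0, fun _ => g, id, id, id, id, rfl, rfl, fun τ hτ => absurd hτ (by omega)⟩
  | cons m l ih =>
    obtain ⟨i, a, b, c⟩ := m
    intro g hg
    simp only [LLegalSeq] at hg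
    obtain ⟨h1, h2, h3, h4, h5, h6, h7, h8, hl⟩ := hg
    obtain ⟨N, pos, nd, A, B, C, h0, hN, hs⟩ := ih _ hl
    refine ⟨N + 1, fun τ => Nat.casesOn τ g pos, fun τ => Nat.casesOn τ i nd,
      fun τ => Nat.casesOn τ a A, fun τ => Nat.casesOn τ b B, fun τ => Nat.casesOn τ c C,
      rfl, hN, ?_⟩
    intro τ hτ
    rcases τ with _ | τ
    · exact ⟨h1, h2, h3, h4, h5, h6, h7, h8, h0⟩
    · exact hs τ (by omega)

end ChipFiring

/-- For every `n ≥ 1` and every reachable terminal configuration of labeled chip-firing with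
chips `1, …, 2^n − 1` initially at the root: each node on levels `1, …, n` holds exactly one
chip and all other nodes hold none; moreover, for every node `i` with `level i ≤ n`, the chip
at node `2^{n − level i}·i` (the bottom straight left descendant of `i`) has the smallest
label and the chip at node `2^{n − level i}·(i+1) − 1` (the bottom straight right descendant
of `i`) has the largest label among all chips held by nodes of the subtree of `i`. -/
theorem stmt0 (n : ℕ) (hn : 1 ≤ n) (f : LConfig)
    (hreach : LReachable (2 ^ n - 1) f) (hterm : LTerminal (2 ^ n - 1) f) :
    (∀ v, 1 ≤ v → level v ≤ n → (chipsAt (2 ^ n - 1) f v).card = 1) ∧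
    (∀ v, 1 ≤ v → n < level v → (chipsAt (2 ^ n - 1) f v).card = 0) ∧
    (∀ i, 1 ≤ i → level i ≤ n →
      (∀ x ∈ Finset.Icc 1 (2 ^ n - 1), ∀ y ∈ Finset.Icc 1 (2 ^ n - 1),
        f x = 2 ^ (n - level i) * i → inSubtree i (f y) → x ≤ y) ∧
      (∀ x ∈ Finset.Icc 1 (2 ^ n - 1), ∀ y ∈ Finset.Icc 1 (2 ^ n - 1),
        f x = 2 ^ (n - level i) * (i + 1) - 1 → inSubtree i (f y) → y ≤ x)) := by
  obtain ⟨l, hl, rfl⟩ := hreach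
  obtain ⟨N, pos, nd, A, B, C, h0, hN, hs⟩ := ChipFiring.exists_trace _ l _ hl
  rw [← hN] at hterm ⊢
  -- The same run, seen with the smallest (`R₀`) or the largest (`R₁`) fired chip as `S`.
  have R₀ : ChipFiring.Run n N 0 pos nd A B C := by
    refine ⟨by omega, fun x => by rw [h0], ?_, ?_, ?_, ?_, ?_, ?_, ?_, ?_, ?_, ?_, ?_⟩ <;>
      intro τ hτ <;>
      obtain ⟨h1, h2, h3, h4, h5, h6, h7, h8, h9⟩ := hs τ hτ <;>
      first | assumption | (rw [Finset.mem_Icc]; omega) | omega | skip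
    intro x
    rw [h9]
    rfl
  have R₁ : ChipFiring.Run n N 1 pos nd C B A := by
    refine ⟨by omega, fun x => by rw [h0], ?_, ?_, ?_, ?_, ?_, ?_, ?_, ?_, ?_, ?_, ?_⟩ <;>
      intro τ hτ <;>
      obtain ⟨h1, h2, h3, h4, h5, h6, h7, h8, h9⟩ := hs τ hτ <;>
      first | assumption | (rw [Finset.mem_Icc]; omega) | omega | skip
    intro x
    rw [h9]
    unfold LFire
    split_ifs <;> omega
  refine ⟨fun v hv hlv => ?_, fun v hv hlv => ?_, fun i hi hli => ⟨?_, ?_⟩⟩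
  · have := R₀.cnt_final hn hterm hv
    unfold ChipFiring.cnt ChipFiring.finalCount at this
    rw [if_pos hlv] at this
    exact_mod_cast this
  · have := R₀.cnt_final hn hterm hv
    unfold ChipFiring.cnt ChipFiring.finalCount at this
    rw [if_neg (by omega)] at this
    exact_mod_cast this
  · intro x hx y hy hfx hin
    refine R₀.subtree_final (P := fun c => x ≤ c) hn hterm ?_ hi hli hy hx le_rfl
      (by simpa using hfx) hin
    intro τ hτ
    have := hs τ hτ
    constructor <;> intro h <;> omega
  · intro x hx y hy hfx hin
    refine R₁.subtree_final (P := fun c => c ≤ x) hn hterm ?_ hi hli hy hx le_rfl hfx hin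
    intro τ hτ
    have := hs τ hτ
    constructor <;> intro h <;> omega
end

section
/- If the initial configuration places N chips at the root, where 2^n − 1 ≤ N ≤ 2^{n+1} − 2 for some n ≥ 1, then in every stable configuration reachable from it: a node holds at least one chip if and only if its level is at most n (so the occupied nodes form a perfect binary tree of height n), and any two nodes on the same level hold the same number of chips. -/
/-- Firing node `i`: it loses 3 chips and sends one chip to each of its left child `2i`,
its right child `2i+1`, and its parent (itself, when `i = 1`, via the self-loop). -/
def fire (i : ℕ) (c : ℕ → ℕ) : ℕ → ℕ := fun k =>
  (if k = i then c k - 3 else c k) + (if k = 2 * i then 1 else 0) +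
    (if k = 2 * i + 1 then 1 else 0) + (if k = parent i then 1 else 0)

/-- Applying a sequence of firings. -/
def fireSeq : List ℕ → (ℕ → ℕ) → (ℕ → ℕ)
  | [], c => c
  | i :: l, c => fireSeq l (fire i c)

/-- A sequence of firings is legal if each fired node is a positive integer
holding at least 3 chips at the moment it fires. -/
def LegalSeq : List ℕ → (ℕ → ℕ) → Prop
  | [], _ => True
  | i :: l, c => 1 ≤ i ∧ 3 ≤ c i ∧ LegalSeq l (fire i c)

/-- A configuration is stable if every node holds at most 2 chips. -/
def Stable (c : ℕ → ℕ) : Prop := ∀ i, 1 ≤ i → c i ≤ 2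

/-- The initial configuration with `N` chips at the root. -/
def initial (N : ℕ) : ℕ → ℕ := fun k => if k = 1 then N else 0

/-- The (possibly negative) number of chips at node `i` after firing every node `j` of the
configuration `c` exactly `v j` times. -/
def net (c v : ℕ → ℤ) (i : ℕ) : ℤ :=
  c i + v (parent i) + v (2 * i) + v (2 * i + 1) - 3 * v i

lemma net_fire (c : ℕ → ℕ) (v : ℕ → ℤ) (i k : ℕ) (hi : 1 ≤ i) (h3 : 3 ≤ c i) (hk : 1 ≤ k) :
    net (fun j => (fire i c j : ℤ)) (fun j => v j - if j = i then 1 else 0) k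
      = net (fun j => (c j : ℤ)) v k := by
  have key : (fire i c k : ℤ) = c k - (if k = i then 3 else 0)
      + (if parent k = i then 1 else 0) + (if 2 * k = i then 1 else 0)
      + (if 2 * k + 1 = i then 1 else 0) := by
    unfold fire parent
    by_cases h : k = i
    · subst h
      split_ifs <;> push_cast <;> omega
    · split_ifs <;> push_cast <;> omega
  unfold net
  simp only [key]
  split_ifs <;> ring

lemma fireSeq_eq_net (l : List ℕ) (c : ℕ → ℕ) (h : LegalSeq l c) (k : ℕ) (hk : 1 ≤ k) :
    (fireSeq l c k : ℤ) = net (fun j => (c j : ℤ)) (fun j => (l.count j : ℤ)) k := by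
  induction l generalizing c with
  | nil => simp [fireSeq, net]
  | cons i l ih =>
    obtain ⟨hi, h3, hl⟩ := h
    rw [fireSeq, ih _ hl, ← net_fire c _ i k hi h3 hk]
    congr 1
    funext j
    rw [List.count_cons]
    by_cases hj : j = i
    · simp [hj]
    · simp [hj, Ne.symm hj]

/-- The least action principle. -/
lemma count_le_of_stabilizing (l : List ℕ) (c : ℕ → ℕ) (h : LegalSeq l c) (v : ℕ → ℤ)
    (hv : ∀ i, 0 ≤ v i) (hs : ∀ i, 1 ≤ i → net (fun j => (c j : ℤ)) v i ≤ 2) (i : ℕ) :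
    (l.count i : ℤ) ≤ v i := by
  induction l generalizing c v with
  | nil => simpa using hv i
  | cons a l ih =>
    obtain ⟨ha, h3, hl⟩ := h
    -- The first fired node has three chips, so it cannot end with two unless `v` fires it.
    have hva : 1 ≤ v a := by
      by_contra hlt
      have h0 := hv a
      have h1 := hs a ha
      have h2 := hv (parent a)
      have h4 := hv (2 * a)
      have h5 := hv (2 * a + 1)
      simp only [net] at h1
      omega
    have := ih (fire a c) hl (fun j => v j - if j = a then 1 else 0)
      (fun j => by
        have := hv j
        by_cases hj : j = a
        · simp only [hj, if_true]; omega
        · simpa [hj] using this)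
      (fun j hj => by rw [net_fire c v a j ha h3 hj]; exact hs j hj)
    rw [List.count_cons]
    by_cases hj : i = a
    · subst hj; simp at this ⊢; omega
    · simpa [hj, Ne.symm hj] using this

lemma log_double (i : ℕ) (hi : 1 ≤ i) : Nat.log 2 (2 * i) = Nat.log 2 i + 1 := by
  rw [mul_comm]; exact Nat.log_mul_base (by norm_num) (by omega)

lemma log_double_succ (i : ℕ) (hi : 1 ≤ i) : Nat.log 2 (2 * i + 1) = Nat.log 2 i + 1 := by
  rw [Nat.log_of_one_lt_of_le (by norm_num) (by omega)]
  congr 2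
  omega

lemma log_parent (i : ℕ) : Nat.log 2 (parent i) = Nat.log 2 i - 1 := by
  unfold parent
  split_ifs with h
  · simp [h]
  · exact Nat.log_div_base 2 i

lemma one_le_parent (i : ℕ) (hi : 1 ≤ i) : 1 ≤ parent i := by
  unfold parent
  split_ifs <;> omega

/-- The odometer of a legal stabilizing sequence depends only on the depth of a node. -/
lemma exists_level_odometer (N : ℕ) (l : List ℕ) (hleg : LegalSeq l (initial N))
    (hst : Stable (fireSeq l (initial N))) :
    ∃ U : ℕ → ℕ, ∀ i, 1 ≤ i → l.count i = U (Nat.log 2 i) := by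
  let A : ℕ → Set ℕ := fun k => (fun i => l.count i) '' {i | 1 ≤ i ∧ Nat.log 2 i = k}
  have hA : ∀ k, (A k).Nonempty := fun k =>
    ⟨_, 2 ^ k, ⟨Nat.one_le_two_pow, Nat.log_pow (by norm_num) k⟩, rfl⟩
  have hle : ∀ i, 1 ≤ i → sInf (A (Nat.log 2 i)) ≤ l.count i := fun i hi =>
    Nat.sInf_le ⟨i, ⟨hi, rfl⟩, rfl⟩
  refine ⟨fun k => sInf (A k), fun i hi => le_antisymm ?_ (hle i hi)⟩
  have := count_le_of_stabilizing l (initial N) hleg (fun i => ((sInf (A (Nat.log 2 i)) : ℕ) : ℤ))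
    (fun i => by positivity) ?_ i
  · exact_mod_cast this
  intro i hi
  -- Compare with a node `j` of the same depth at which the minimum is attained.
  obtain ⟨j, ⟨hj, hji⟩, hjm⟩ := Nat.sInf_mem (hA (Nat.log 2 i))
  have hfin := hst j hj
  have heq := fireSeq_eq_net l (initial N) hleg j hj
  have h1 := hle (parent j) (one_le_parent j hj)
  have h2 := hle (2 * j) (by omega)
  have h3 := hle (2 * j + 1) (by omega)
  rw [log_parent, hji] at h1
  rw [log_double j hj, hji] at h2
  rw [log_double_succ j hj, hji] at h3
  have hinit : initial N i = initial N j := by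
    unfold initial
    have hone : ∀ m, 1 ≤ m → (m = 1 ↔ Nat.log 2 m = 0) := by
      intro m hm
      rw [Nat.log_eq_zero_iff]
      omega
    simp only [hone i hi, hone j hj, hji]
  simp only [net] at heq ⊢
  simp only [log_parent, log_double i hi, log_double_succ i hi, hinit]
  simp only at hjm
  omega

/-- If `2^n − 1 ≤ N ≤ 2^{n+1} − 2` chips start at the root, then in every reachable stable
configuration, a node holds at least one chip iff its level is at most `n`, and any two nodes
on the same level hold the same number of chips. -/
theorem stmt1 (n N : ℕ) (hn : 1 ≤ n) (hN1 : 2 ^ n - 1 ≤ N) (hN2 : N ≤ 2 ^ (n + 1) - 2)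
    (l : List ℕ) (hleg : LegalSeq l (initial N)) (hst : Stable (fireSeq l (initial N))) :
    (∀ v, 1 ≤ v → (1 ≤ fireSeq l (initial N) v ↔ level v ≤ n)) ∧
    (∀ v w, 1 ≤ v → 1 ≤ w → level v = level w →
      fireSeq l (initial N) v = fireSeq l (initial N) w) := by
  obtain ⟨U, hU⟩ := exists_level_odometer N l hleg hst
  -- `g k` is the net number of chips entering a node of depth `k` from above.
  obtain ⟨g, hg0, hgs⟩ : ∃ g : ℕ → ℤ, g 0 = N ∧ ∀ k, g (k + 1) = U k - U (k + 1) :=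
    ⟨fun k => Nat.casesOn k (N : ℤ) (fun k => U k - U (k + 1)), rfl, fun _ => rfl⟩
  have hflow : ∀ i, 1 ≤ i → g (Nat.log 2 i) =
      initial N i + U (Nat.log 2 i - 1) - U (Nat.log 2 i) := by
    intro i hi
    by_cases h1 : i = 1
    · simp [h1, hg0, initial]
    · obtain ⟨k, hk⟩ : ∃ k, Nat.log 2 i = k + 1 :=
        Nat.exists_eq_succ_of_ne_zero (by rw [Ne, Nat.log_eq_zero_iff]; omega)
      simp [hk, hgs, initial, h1]
  have hC : ∀ i, 1 ≤ i → (fireSeq l (initial N) i : ℤ) =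
      g (Nat.log 2 i) - 2 * g (Nat.log 2 i + 1) := by
    intro i hi
    rw [fireSeq_eq_net l _ hleg i hi, hflow i hi, hgs]
    simp only [net, hU i hi, hU _ (one_le_parent i hi), hU (2 * i) (by omega),
      hU (2 * i + 1) (by omega), log_parent, log_double i hi, log_double_succ i hi]
    ring
  have hpow : ∀ k, Nat.log 2 (2 ^ k) = k := fun k => Nat.log_pow (by norm_num) k
  have hC0 : ∀ k, 0 ≤ g k - 2 * g (k + 1) := by
    intro k
    have := hC (2 ^ k) Nat.one_le_two_pow
    rw [hpow] at this
    omega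
  have hC2 : ∀ k, g k - 2 * g (k + 1) ≤ 2 := by
    intro k
    have := hC (2 ^ k) Nat.one_le_two_pow
    have h2 := hst (2 ^ k) Nat.one_le_two_pow
    rw [hpow] at this
    omega
  obtain ⟨M, hM⟩ : ∃ M, ∀ k, M ≤ k → U k = 0 := by
    refine ⟨l.sum + 1, fun k hk => ?_⟩
    rw [← hpow k, ← hU _ Nat.one_le_two_pow, List.count_eq_zero]
    intro hmem
    have h1 := List.le_sum_of_mem hmem
    have h2 : k < 2 ^ k := Nat.lt_two_pow_self
    omega
  have hgnn : ∀ k, 0 ≤ g k := by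
    have aux : ∀ d k, M + 1 ≤ k + d → 0 ≤ g k := by
      intro d
      induction d with
      | zero =>
        intro k hk
        obtain ⟨k, rfl⟩ : ∃ j, k = j + 1 := ⟨k - 1, by omega⟩
        rw [hgs, hM k (by omega), hM (k + 1) (by omega)]
        simp
      | succ d ih =>
        intro k hk
        have := ih (k + 1) (by omega)
        have := hC0 k
        omega
    exact fun k => aux (M + 1) k (by omega)
  have hanti : Antitone U := antitone_nat_of_succ_le fun k => by
    have := hgnn (k + 1)
    rw [hgs] at this
    omega
  -- An empty level never fires: otherwise unfire all nodes down to that depth.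
  have hzero : ∀ k, g k - 2 * g (k + 1) = 0 → U k = 0 := by
    intro k hk
    by_contra hpos
    have hle := count_le_of_stabilizing l (initial N) hleg
      (fun i => if i = 0 then 0 else U (Nat.log 2 i) - if Nat.log 2 i ≤ k then 1 else 0) ?_ ?_ (2 ^ k)
    · rw [hU _ Nat.one_le_two_pow] at hle
      simp [hpow] at hle
    · intro i
      split_ifs with h0 h1
      · exact le_rfl
      · have := hanti h1
        omega
      · omega
    · intro i hi
      have hc := hC2 (Nat.log 2 i)
      have hf := hflow i hi
      have hs := hgs (Nat.log 2 i)
      have hp := one_le_parent i hi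
      have e1 : i ≠ 0 := by omega
      have e2 : parent i ≠ 0 := by omega
      have e3 : 2 * i ≠ 0 := by omega
      have e4 : 2 * i + 1 ≠ 0 := by omega
      simp only [net, e1, e2, e3, e4, if_false, log_parent, log_double i hi,
        log_double_succ i hi]
      by_cases hki : Nat.log 2 i = k
      · rw [hki] at hf hs ⊢
        have a1 : k - 1 ≤ k := by omega
        have a2 : ¬ k + 1 ≤ k := by omega
        simp only [a1, a2, le_refl, if_true, if_false]
        omega
      · split_ifs <;> omega
  have hafter : ∀ k, g k - 2 * g (k + 1) = 0 → ∀ j, k ≤ j → g j - 2 * g (j + 1) = 0 := by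
    intro k hk j hj
    rcases hj.eq_or_lt with rfl | hlt
    · exact hk
    · have h0 := hzero k hk
      obtain ⟨j, rfl⟩ : ∃ m, j = m + 1 := ⟨j - 1, by omega⟩
      have h1 := hanti (show k ≤ j by omega)
      have h2 := hanti (show k ≤ j + 1 by omega)
      have h3 := hanti (show k ≤ j + 1 + 1 by omega)
      rw [hgs, hgs]
      omega
  have hupper : ∀ m, (N : ℤ) + 2 ≤ 2 ^ m * (g m + 2) := by
    intro m
    induction m with
    | zero => simp [hg0]
    | succ m ih =>
      have h1 := hC2 m
      have h2 : (0 : ℤ) < 2 ^ m := by positivity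
      rw [pow_succ]
      nlinarith
  have hlower : ∀ m, (∀ j, j < m → 1 ≤ g j - 2 * g (j + 1)) →
      2 ^ m * (g m + 1) ≤ (N : ℤ) + 1 := by
    intro m
    induction m with
    | zero => simp [hg0]
    | succ m ih =>
      intro hj
      have h0 := ih fun j hjm => hj j (by omega)
      have h1 := hj m (by omega)
      have h2 : (0 : ℤ) < 2 ^ m := by positivity
      rw [pow_succ]
      nlinarith
  -- Level `n` has depth `n - 1`; it is occupied, and depth `n` is not.
  have hlast : g (n - 1) - 2 * g (n - 1 + 1) ≠ 0 := by
    intro h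
    have hu := hzero _ h
    have h1 := hanti (show n - 1 ≤ n - 1 + 1 by omega)
    have h2 := hgs (n - 1)
    have h3 : g (n - 1) = 0 := by omega
    have h4 := hupper (n - 1)
    obtain ⟨n, rfl⟩ : ∃ m, n = m + 1 := ⟨n - 1, by omega⟩
    simp only [Nat.add_sub_cancel] at h3 h4
    rw [h3] at h4
    norm_cast at h4
    rw [pow_succ] at hN1
    omega
  have hnext : g n - 2 * g (n + 1) = 0 := by
    by_contra h
    have h1 := hlower (n + 1) fun j hj => by
      by_contra hlt
      have := hC0 j
      exact h (hafter j (by omega) n (by omega))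
    have h2 : (2 : ℤ) ^ (n + 1) ≤ 2 ^ (n + 1) * (g (n + 1) + 1) :=
      le_mul_of_one_le_right (by positivity) (by have := hgnn (n + 1); omega)
    have h3 : (2 : ℤ) ^ (n + 1) ≤ N + 1 := h2.trans h1
    norm_cast at h3
    have h4 : 2 ≤ 2 ^ (n + 1) := by
      rw [pow_succ]
      have := Nat.one_le_two_pow (n := n)
      omega
    omega
  refine ⟨fun v hv => ?_, fun v w hv hw hvw => ?_⟩
  · have hcv := hC v hv
    unfold level
    constructor
    · intro h
      by_contra hlt
      have := hafter n hnext (Nat.log 2 v) (by omega)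
      omega
    · intro h
      by_contra hlt
      exact hlast (hafter (Nat.log 2 v) (by omega) (n - 1) (by omega))
  · have hlog : Nat.log 2 v = Nat.log 2 w := by
      unfold level at hvw
      omega
    have h1 := hC v hv
    have h2 := hC w hw
    rw [hlog] at h1
    omega
end

section
/- If the initial configuration places N chips at the root, where 2^n − 1 ≤ N ≤ 2^{n+1} − 2 for some n ≥ 1, and a_n a_{n−1} ⋯ a_1 a_0 (with a_n = 1) is the binary expansion of N + 1, then every stable configuration reachable from the initial configuration has exactly a_i + 1 chips at each node on level i + 1 for 0 ≤ i ≤ n − 1, and no chips at any node of level greater than n. -/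
/-- The change in the number of chips at `v` when each node `k` fires `u k` times. At the root the
term `u (parent 1) = u 1` accounts for the self-loop. -/
def lap (u : ℕ → ℤ) (v : ℕ) : ℤ := u (parent v) + u (2 * v) + u (2 * v + 1) - 3 * u v

lemma parent_pos {v : ℕ} (hv : 1 ≤ v) : 1 ≤ parent v := by
  unfold parent; split_ifs <;> omega

lemma fire_eq_add_lap (c : ℕ → ℕ) {i k : ℕ} (hi : 1 ≤ i) (hk : 1 ≤ k) (hc : 3 ≤ c i) :
    (fire i c k : ℤ) = c k + lap (fun j => if j = i then 1 else 0) k := by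
  unfold fire lap parent
  by_cases hki : k = i
  · subst hki
    by_cases h1 : k = 1
    · subst h1; simp; omega
    · simp only [if_true, if_neg h1]
      split_ifs <;> push_cast <;> omega
  · simp only [if_neg hki]
    split_ifs <;> push_cast <;> omega

/-- The final configuration is determined by how often each node fires. -/
lemma fireSeq_eq_add_lap (l : List ℕ) (c : ℕ → ℕ) (h : LegalSeq l c) {v : ℕ} (hv : 1 ≤ v) :
    (fireSeq l c v : ℤ) = c v + lap (fun k => (l.count k : ℤ)) v := by
  induction l generalizing c with
  | nil => simp [fireSeq, lap]
  | cons i l ih =>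
    obtain ⟨hi, hc, hl⟩ := h
    rw [fireSeq, ih _ hl, fire_eq_add_lap c hi hv hc]
    simp only [lap, List.count_cons, beq_iff_eq, eq_comm (a := i)]
    push_cast
    ring

/-- Least action principle: a legal sequence fires no node more often than a nonnegative firing
vector `w` that leads to a configuration with at most two chips per node. -/
lemma count_le_of_stable (l : List ℕ) (c : ℕ → ℕ) (h : LegalSeq l c) (w : ℕ → ℤ)
    (hw : ∀ v, 1 ≤ v → 0 ≤ w v) (hs : ∀ v, 1 ≤ v → c v + lap w v ≤ 2) {v : ℕ} (hv : 1 ≤ v) :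
    (l.count v : ℤ) ≤ w v := by
  induction l generalizing c w with
  | nil => simpa using hw v hv
  | cons i l ih =>
    obtain ⟨hi, hc, hl⟩ := h
    -- If `w i = 0`, then `lap w i ≥ 0` and the at least three chips at `i` contradict `hs`.
    have hwi : 1 ≤ w i := by
      by_contra hlt
      have h0 := hs i hi
      have h1 := hw _ (parent_pos hi)
      have h2 := hw (2 * i) (by omega)
      have h3 := hw (2 * i + 1) (by omega)
      unfold lap at h0
      omega
    have key := ih (fire i c) hl (fun k => w k - if k = i then 1 else 0)
      (by
        intro k hk
        have := hw k hk
        by_cases hki : k = i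
        · subst hki; simpa using hwi
        · simpa [hki] using this)
      (by
        intro k hk
        rw [fire_eq_add_lap c hi hk hc]
        have := hs k hk
        simp only [lap] at this ⊢
        linarith)
    simp only [List.count_cons, beq_iff_eq, eq_comm (a := i)]
    push_cast
    linarith

/-- A nonnegative `z` supported on nodes where `t ≥ 1` and below a bound `B` must vanish if
`t - lap z ≤ 2` everywhere: at the largest node maximizing `z`, the value is at least three. -/
lemma eq_zero_of_stable (z t : ℕ → ℤ) (B : ℕ) (hz : ∀ v, 1 ≤ v → 0 ≤ z v)
    (hB : ∀ v, B ≤ v → z v ≤ 0) (ht : ∀ v, 1 ≤ v → 0 < z v → 1 ≤ t v)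
    (hs : ∀ v, 1 ≤ v → t v - lap z v ≤ 2) {v : ℕ} (hv : 1 ≤ v) : z v = 0 := by
  by_contra hne
  have hpos : 0 < z v := lt_of_le_of_ne (hz v hv) (Ne.symm hne)
  have hvB : v < B := by
    by_contra h
    have := hB v (by omega)
    omega
  obtain ⟨m, hm, hmax⟩ := (Finset.Ico 1 B).exists_max_image z ⟨v, by simp; omega⟩
  have hmpos : 0 < z m := lt_of_lt_of_le hpos (hmax v (by simp; omega))
  have hall : ∀ k, 1 ≤ k → z k ≤ z m := by
    intro k hk
    by_cases hkB : k < B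
    · exact hmax k (by simp; omega)
    · have := hB k (by omega)
      omega
  obtain ⟨x, hx, hxmax⟩ := ((Finset.Ico 1 B).filter (fun k => z k = z m)).exists_max_image id
    ⟨m, by simpa using hm⟩
  simp only [Finset.mem_filter, Finset.mem_Ico, id] at hx hxmax
  obtain ⟨⟨hx1, hxB⟩, hxz⟩ := hx
  have hlt : ∀ k, x < k → z k < z m := by
    intro k hk
    refine lt_of_le_of_ne (hall k (by omega)) fun he => ?_
    have hkB : k < B := by
      by_contra h
      have := hB k (by omega)
      omega
    have := hxmax k ⟨⟨by omega, hkB⟩, he⟩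
    omega
  have h1 := hlt (2 * x) (by omega)
  have h2 := hlt (2 * x + 1) (by omega)
  have h3 := hall _ (parent_pos hx1)
  have h4 := hs x hx1
  have h5 := ht x hx1 (by omega)
  unfold lap at h4
  omega

/-- The number of times each node of level `i` fires during stabilization, where `M = N + 1`. -/
def levelFirings (n M i : ℕ) : ℤ := ∑ j ∈ Finset.Ico i n, ((M / 2 ^ j : ℕ) - 1 : ℤ)

/-- The claimed stable configuration, where `M = N + 1`. -/
def target (n M v : ℕ) : ℤ :=
  if level v ≤ n then ((M.testBit (level v - 1)).toNat : ℤ) + 1 else 0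

lemma levelFirings_of_le {n M i : ℕ} (h : n ≤ i) : levelFirings n M i = 0 := by
  simp [levelFirings, Finset.Ico_eq_empty_of_le h]

lemma levelFirings_of_lt {n M i : ℕ} (h : i < n) :
    levelFirings n M i = ((M / 2 ^ i : ℕ) - 1 : ℤ) + levelFirings n M (i + 1) := by
  simp [levelFirings, Finset.sum_eq_sum_Ico_succ_bot h]

lemma levelFirings_nonneg {n M : ℕ} (hM : 2 ^ n ≤ M) (i : ℕ) : 0 ≤ levelFirings n M i := by
  refine Finset.sum_nonneg fun j hj => ?_
  have h1 : 2 ^ j ≤ M :=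
    (Nat.pow_le_pow_right (by norm_num) (Finset.mem_Ico.mp hj).2.le).trans hM
  have := Nat.div_pos h1 (by positivity)
  omega

/-- The recursion of `levelFirings_of_lt` also holds at `i = n`, because `⌊M/2^n⌋ = 1`. -/
lemma levelFirings_of_le' {n M i : ℕ} (hM : M / 2 ^ n = 1) (h : i ≤ n) :
    levelFirings n M i = ((M / 2 ^ i : ℕ) - 1 : ℤ) + levelFirings n M (i + 1) := by
  rcases h.lt_or_eq with h | h
  · exact levelFirings_of_lt h
  · subst h
    rw [levelFirings_of_le le_rfl, levelFirings_of_le (Nat.le_succ _), hM]; simp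

lemma div_pow_eq (M i : ℕ) :
    M / 2 ^ i = 2 * (M / 2 ^ (i + 1)) + (M.testBit i).toNat := by
  rw [Nat.toNat_testBit, pow_succ, ← Nat.div_div_eq_div_mul]
  omega

lemma level_pos (v : ℕ) : 1 ≤ level v := by simp [level]

lemma level_two_mul {v : ℕ} (hv : 1 ≤ v) : level (2 * v) = level v + 1 := by
  unfold level
  rw [mul_comm, Nat.log_mul_base (by norm_num) (by omega)]

lemma level_two_mul_add_one {v : ℕ} (hv : 1 ≤ v) : level (2 * v + 1) = level v + 1 := by
  unfold level
  rw [Nat.log_of_one_lt_of_le (b := 2) (n := 2 * v + 1) (by norm_num) (by omega)]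
  congr 3
  omega

lemma level_eq_level_parent {v : ℕ} (hv : 2 ≤ v) : level v = level (parent v) + 1 := by
  unfold level parent
  rw [if_neg (by omega), Nat.log_of_one_lt_of_le (b := 2) (n := v) (by norm_num) hv]

/-- Firing according to `levelFirings` leads from the initial configuration to the claimed one. -/
lemma initial_add_lap {n N : ℕ} (hn : 1 ≤ n) (hM : (N + 1) / 2 ^ n = 1) {v : ℕ} (hv : 1 ≤ v) :
    (initial N v : ℤ) + lap (fun k => levelFirings n (N + 1) (level k)) v
      = target n (N + 1) v := by
  simp only [lap, level_two_mul hv, level_two_mul_add_one hv]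
  rcases Nat.lt_or_ge 1 v with h | h
  · have hp := level_eq_level_parent h
    have hp1 := level_pos (parent v)
    obtain ⟨p, hpp⟩ : ∃ p, level (parent v) = p := ⟨_, rfl⟩
    simp only [initial, if_neg (show v ≠ 1 by omega), target, hp, hpp]
    by_cases hle : p + 1 ≤ n
    · rw [if_pos hle, levelFirings_of_le' hM (show p ≤ n by omega), levelFirings_of_le' hM hle]
      have := div_pow_eq (N + 1) p
      simp only [Nat.add_sub_cancel]
      push_cast [this]
      ring
    · rw [if_neg hle, levelFirings_of_le (show n ≤ p by omega),
        levelFirings_of_le (show n ≤ p + 1 by omega),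
        levelFirings_of_le (show n ≤ p + 1 + 1 by omega)]
      simp
  · obtain rfl : v = 1 := by omega
    have hl : level 1 = 1 := by simp [level]
    have hp : parent 1 = 1 := by simp [parent]
    simp only [initial, if_true, target, hl, hp]
    rw [if_pos hn, levelFirings_of_le' hM hn]
    have := div_pow_eq (N + 1) 0
    simp only [pow_zero, Nat.div_one, zero_add] at this
    simp only [Nat.sub_self]
    have h2 : (N : ℤ) + 1 = 2 * ((N + 1) / 2 ^ 1 : ℕ) + ((N + 1).testBit 0).toNat := by
      exact_mod_cast this
    linarith

/-- If `2^n − 1 ≤ N ≤ 2^{n+1} − 2` chips start at the root and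
`a_n a_{n-1} ⋯ a_1 a_0` is the binary expansion of `N + 1`, then every reachable stable
configuration has exactly `a_i + 1` chips at each node on level `i + 1` for `0 ≤ i ≤ n − 1`,
and no chips at any node of level greater than `n`. -/
theorem stmt2 (n N : ℕ) (hn : 1 ≤ n) (hN1 : 2 ^ n - 1 ≤ N) (hN2 : N ≤ 2 ^ (n + 1) - 2)
    (l : List ℕ) (hleg : LegalSeq l (initial N)) (hst : Stable (fireSeq l (initial N))) :
    (∀ i, i < n → ∀ v, 1 ≤ v → level v = i + 1 →
      fireSeq l (initial N) v = ((N + 1).testBit i).toNat + 1) ∧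
    (∀ v, 1 ≤ v → n < level v → fireSeq l (initial N) v = 0) := by
  have hpow : 1 ≤ 2 ^ n := Nat.one_le_two_pow
  have hM1 : 2 ^ n ≤ N + 1 := by omega
  have hM : (N + 1) / 2 ^ n = 1 := by
    rw [pow_succ] at hN2
    exact Nat.div_eq_of_lt_le (by omega) (by omega)
  set w : ℕ → ℤ := fun k => levelFirings n (N + 1) (level k) with hw
  have hwt : ∀ v, 1 ≤ v → (initial N v : ℤ) + lap w v = target n (N + 1) v :=
    fun v hv => initial_add_lap hn hM hv
  have htarget : ∀ v, target n (N + 1) v ≤ 2 := by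
    intro v
    have := Bool.toNat_le ((N + 1).testBit (level v - 1))
    unfold target
    split_ifs <;> omega
  have hle : ∀ v, 1 ≤ v → (l.count v : ℤ) ≤ w v := fun v hv =>
    count_le_of_stable l _ hleg w (fun v _ => levelFirings_nonneg hM1 _)
      (fun v hv => (hwt v hv).trans_le (htarget v)) hv
  have hfinal : ∀ v, 1 ≤ v → (fireSeq l (initial N) v : ℤ)
      = target n (N + 1) v - lap (fun k => w k - l.count k) v := by
    intro v hv
    rw [fireSeq_eq_add_lap l _ hleg hv, ← hwt v hv]
    simp only [lap]
    ring
  have hzero : ∀ v, 1 ≤ v → w v - l.count v = 0 := by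
    intro v hv
    refine eq_zero_of_stable (fun k => w k - l.count k) (target n (N + 1)) (2 ^ n)
      (fun v hv => sub_nonneg.mpr (hle v hv)) ?_ ?_ ?_ hv
    · intro v hv
      have h1 : n ≤ level v := by
        have := Nat.le_log_of_pow_le (by norm_num) hv
        unfold level; omega
      have h2 : w v = 0 := levelFirings_of_le h1
      simp [h2]
    · intro v hv hpos
      have h1 : level v ≤ n := by
        by_contra h
        have h2 : w v = 0 := levelFirings_of_le (by omega)
        simp only [h2] at hpos
        omega
      simp only [target, if_pos h1]
      omega
    · intro v hv
      rw [← hfinal v hv]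
      exact_mod_cast hst v hv
  have hres : ∀ v, 1 ≤ v → (fireSeq l (initial N) v : ℤ) = target n (N + 1) v := by
    intro v hv
    rw [hfinal v hv]
    simp only [lap, hzero _ (parent_pos hv), hzero _ hv, hzero (2 * v) (by omega),
      hzero (2 * v + 1) (by omega)]
    ring
  constructor
  · intro i hi v hv hlv
    have h := hres v hv
    rw [target, if_pos (by omega), hlv, Nat.add_sub_cancel] at h
    exact_mod_cast h
  · intro v hv hlv
    have h := hres v hv
    rw [target, if_neg (by omega)] at h
    exact_mod_cast h
end

section
/- If the initial configuration places exactly 2^n − 1 chips at the root (n ≥ 1), then every stabilizing sequence consists of exactly 2^n(n − 3) + n + 3 firing moves in total. -/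
/-- `w` is a debt for `c` with respect to the target having one chip on each of the nodes
`1, …, 2 ^ n - 1`: firing every node `k` exactly `w k` times leads from `c` to the target. The
equation is arranged to avoid subtraction; at the root, `parent 1 = 1` accounts for the
self-loop. -/
def Owed (n : ℕ) (c w : ℕ → ℕ) : Prop :=
  (∀ i, 2 ^ n ≤ i → w i = 0) ∧
  ∀ k, 1 ≤ k → c k + w (parent k) + w (2 * k) + w (2 * k + 1) =
    (if k < 2 ^ n then 1 else 0) + 3 * w k

theorem Owed.pos {n : ℕ} {c w : ℕ → ℕ} (h : Owed n c w) {i : ℕ} (hi : 1 ≤ i) (hc : 3 ≤ c i) :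
    1 ≤ w i := by
  have := h.2 i hi
  split_ifs at this <;> omega

theorem Owed.fire {n : ℕ} {c w : ℕ → ℕ} (h : Owed n c w) {i : ℕ} (hi : 1 ≤ i) (hc : 3 ≤ c i) :
    Owed n (fire i c) (Function.update w i (w i - 1)) := by
  have hp := h.pos hi hc
  refine ⟨fun j hj => ?_, fun k hk => ?_⟩
  · have := h.1 j hj
    by_cases hji : j = i
    · subst hji; simp [this]
    · simp [hji, this]
  · have hk2 := h.2 k hk
    generalize (if k < 2 ^ n then 1 else 0) = s at hk2 ⊢
    have e (j : ℕ) : Function.update w i (w i - 1) j + (if j = i then 1 else 0) = w j := by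
      by_cases hji : j = i
      · subst hji; simp; omega
      · simp [hji]
    have e1 := e (parent k)
    have e2 := e (2 * k)
    have e3 := e (2 * k + 1)
    have e4 := e k
    generalize Function.update w i (w i - 1) = v at *
    -- `k` is a child of `i` exactly when `i` is the parent of `k`, so the indicators on the two sides
    -- match up once the root is treated apart.
    have hck : k ≠ i ∨ 3 ≤ c k := by
      by_cases hki : k = i
      · right; rwa [hki]
      · left; exact hki
    unfold _root_.fire
    by_cases hk1 : k = 1 <;> by_cases hi1 : i = 1 <;>
      simp only [parent, hk1, hi1, if_true, if_false] at hk2 e1 e2 e3 e4 hck ⊢ <;>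
      split_ifs at * <;> omega

theorem Owed.eq_zero_of_stable {n : ℕ} {c w : ℕ → ℕ} (h : Owed n c w) (hs : Stable c)
    {i : ℕ} (hi : 1 ≤ i) : w i = 0 := by
  by_contra hne
  have hlt (j : ℕ) (hj : w j ≠ 0) : j < 2 ^ n := by
    by_contra hge
    exact hj (h.1 j (by omega))
  -- Maximizing `w` first and the index second picks a deepest node among those of maximal debt.
  obtain ⟨m, hm, hmax⟩ := Finset.exists_max_image (Finset.Ico 1 (2 ^ n))
    (fun j => toLex (w j, j)) ⟨i, by simp [hi, hlt i hne]⟩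
  simp only [Finset.mem_Ico, Prod.Lex.toLex_le_toLex] at hm hmax
  have hpos : 1 ≤ w m := by
    have := hmax i ⟨hi, hlt i hne⟩
    omega
  have hle (j : ℕ) (hj : 1 ≤ j) : w j < w m ∨ w j = w m ∧ j ≤ m := by
    by_cases h0 : w j = 0
    · left; omega
    · exact hmax j ⟨hj, hlt j h0⟩
  have h1 := hle (2 * m) (by omega)
  have h2 := hle (2 * m + 1) (by omega)
  have h3 := hle (parent m) (by unfold parent; split_ifs <;> omega)
  have h4 := h.2 m hm.1
  have h5 := hs m hm.1
  rw [if_pos hm.2] at h4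
  omega

theorem Owed.length_eq {n : ℕ} (l : List ℕ) : ∀ {c w : ℕ → ℕ}, Owed n c w → LegalSeq l c →
    Stable (fireSeq l c) → l.length = ∑ i ∈ Finset.Ico 1 (2 ^ n), w i := by
  induction l with
  | nil =>
    intro c w h _ hs
    symm
    exact Finset.sum_eq_zero fun i hi => h.eq_zero_of_stable hs (Finset.mem_Ico.1 hi).1
  | cons i l ih =>
    rintro c w h ⟨hi, hc, hl⟩ hs
    have hp := h.pos hi hc
    have hmem : i ∈ Finset.Ico 1 (2 ^ n) := by
      rw [Finset.mem_Ico]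
      refine ⟨hi, ?_⟩
      by_contra hge
      have := h.1 i (by omega)
      omega
    have := ih (h.fire hi hc) hl hs
    rw [Finset.sum_update_of_mem hmem] at this
    rw [List.length_cons, this, ← Finset.add_sum_erase _ _ hmem, Finset.sdiff_singleton_eq_erase]
    omega

/-- The debt of a node whose depth is `m` less than `n`. It vanishes at `m = 0` and `m = 1`. -/
def debt (m : ℕ) : ℕ := 2 ^ m - 1 - m

theorem debt_add (m : ℕ) : debt m + 1 + m = 2 ^ m := by
  have := Nat.lt_two_pow_self (n := m)
  unfold debt
  omega

theorem owed_initial (n : ℕ) (hn : 1 ≤ n) :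
    Owed n (initial (2 ^ n - 1)) (fun i => debt (n - Nat.log 2 i)) := by
  constructor
  · intro i hi
    have : n ≤ Nat.log 2 i := Nat.le_log_of_pow_le (by norm_num) hi
    simp [Nat.sub_eq_zero_of_le this, debt]
  · intro k hk
    have l1 : Nat.log 2 (2 * k) = Nat.log 2 k + 1 := by
      rw [mul_comm]; exact Nat.log_mul_base (by norm_num) (by omega)
    have l2 : Nat.log 2 (2 * k + 1) = Nat.log 2 k + 1 := by
      rw [Nat.log_of_one_lt_of_le (by norm_num) (by omega)]
      congr 2; omega
    have hlog : k < 2 ^ n ↔ Nat.log 2 k < n :=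
      (Nat.log_lt_iff_lt_pow (by norm_num) (by omega)).symm
    simp only [l1, l2, initial, parent, hlog]
    by_cases hk1 : k = 1
    · subst hk1
      obtain ⟨m, rfl⟩ : ∃ m, n = m + 1 := ⟨n - 1, by omega⟩
      have a := debt_add m
      have b := debt_add (m + 1)
      rw [pow_succ] at *
      simp
      omega
    · have l3 : Nat.log 2 k = Nat.log 2 (k / 2) + 1 :=
        Nat.log_of_one_lt_of_le (by norm_num) (by omega)
      simp only [hk1, if_false, l3]
      generalize Nat.log 2 (k / 2) = L
      split_ifs with hL
      · obtain ⟨m, rfl⟩ : ∃ m, n = m + L + 2 := ⟨n - L - 2, by omega⟩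
        have a := debt_add m
        have b := debt_add (m + 1)
        have d := debt_add (m + 2)
        rw [show m + L + 2 - L = m + 2 by omega, show m + L + 2 - (L + 1) = m + 1 by omega,
          show m + L + 2 - (L + 1 + 1) = m by omega]
        rw [pow_succ] at b d
        rw [pow_succ] at d
        omega
      · have h0 : debt 0 = 0 := rfl
        have h1 : debt 1 = 0 := rfl
        rw [show n - (L + 1) = 0 by omega, show n - (L + 1 + 1) = 0 by omega]
        rcases (show n - L = 0 ∨ n - L = 1 by omega) with h | h <;> simp [h, h0, h1]

theorem sum_debt (n : ℕ) : ∀ a ≤ n,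
    ((∑ i ∈ Finset.Ico 1 (2 ^ a), debt (n - Nat.log 2 i) : ℕ) : ℤ) =
      a * 2 ^ n - (1 + n) * (2 ^ a - 1) + (a - 2) * 2 ^ a + 2 := by
  intro a
  induction a with
  | zero => intro _; simp
  | succ a ih =>
    intro ha
    -- The block `[2 ^ a, 2 ^ (a + 1))` consists of the `2 ^ a` nodes at depth `a`.
    have hblock : ∑ i ∈ Finset.Ico (2 ^ a) (2 ^ (a + 1)), debt (n - Nat.log 2 i) =
        2 ^ a * debt (n - a) := by
      rw [Finset.sum_congr rfl (g := fun _ => debt (n - a))]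
      · simp [pow_succ, mul_two]
      · intro i hi
        rw [Finset.mem_Ico] at hi
        rw [Nat.log_eq_of_pow_le_of_lt_pow hi.1 hi.2]
    rw [← Finset.sum_Ico_consecutive _ Nat.one_le_two_pow
      (Nat.pow_le_pow_right (by norm_num) (Nat.le_succ a)), hblock, Nat.cast_add, ih (by omega)]
    obtain ⟨m, rfl⟩ : ∃ m, n = a + m := ⟨n - a, by omega⟩
    have hd : (debt m : ℤ) = 2 ^ m - 1 - m := by
      have := debt_add m
      zify at this
      linarith
    rw [Nat.add_sub_cancel_left]
    push_cast
    rw [hd]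
    ring

/-- If `2^n − 1` chips start at the root, then every stabilizing sequence consists of exactly
`2^n(n − 3) + n + 3` firing moves in total. -/
theorem stmt5 (n : ℕ) (hn : 1 ≤ n) (l : List ℕ)
    (hleg : LegalSeq l (initial (2 ^ n - 1)))
    (hst : Stable (fireSeq l (initial (2 ^ n - 1)))) :
    (l.length : ℤ) = 2 ^ n * ((n : ℤ) - 3) + n + 3 := by
  rw [(owed_initial n hn).length_eq l hleg hst, sum_debt n n le_rfl]
  ring
end
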